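/- arXiv:0811.0965 — 3 statements merged into one kernel-verified Lean document; each statement's English description precedes it below -/
import Mathlib

section
/- Let f : 𝔹 → 𝔹 be regular (f(q) = ∑_{n≥0} qⁿaₙ converging on 𝔹, with f(𝔹) ⊆ 𝔹) and suppose f is a bijection of 𝔹 onto 𝔹. Then for every ν ∈ ℍ with |ν| = 1, the modulus |f(q)| tends to 1 as q tends to ν within 𝔹: for every sequence (qₙ) in 𝔹 with qₙ → ν, one has |f(qₙ)| → 1. -/
open Quaternion

namespace BLRB

/-- the quaternion with given coordinates. -/
def mkq (x y z w : ℝ) : ℍ[ℝ] := ⟨x, y, z, w⟩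

@[simp] theorem mkq_re (x y z w : ℝ) : (mkq x y z w).re = x := rfl
@[simp] theorem mkq_imI (x y z w : ℝ) : (mkq x y z w).imI = y := rfl
@[simp] theorem mkq_imJ (x y z w : ℝ) : (mkq x y z w).imJ = z := rfl
@[simp] theorem mkq_imK (x y z w : ℝ) : (mkq x y z w).imK = w := rfl

/-- a power series with real coefficients, on the complex numbers. -/
noncomputable def G (b : ℕ → ℝ) (z : ℂ) : ℂ := ∑' n, z ^ n * (b n : ℂ)

theorem summ (b : ℕ → ℝ) (hb : ∀ r : ℝ, 0 ≤ r → r < 1 → Summable (fun n => r ^ n * b n))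
    (z : ℂ) (hz : ‖z‖ < 1) : Summable (fun n => z ^ n * (b n : ℂ)) := by
  have h := (hb ‖z‖ (norm_nonneg _) hz).norm
  refine Summable.of_norm ?_
  refine h.congr ?_
  intro n
  simp

theorem diffG (b : ℕ → ℝ) (hb : ∀ r : ℝ, 0 ≤ r → r < 1 → Summable (fun n => r ^ n * b n)) :
    DifferentiableOn ℂ (G b) (Metric.ball 0 1) := by
  intro z hz
  simp only [Metric.mem_ball, dist_zero_right] at hz
  obtain ⟨r, h1, h2⟩ := exists_between hz
  have hr : 0 ≤ r := (norm_nonneg z).trans h1.le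
  have : DifferentiableOn ℂ (fun z => ∑' n, z ^ n * (b n : ℂ)) (Metric.ball 0 r) := by
    refine Complex.differentiableOn_tsum_of_summable_norm (u := fun n => ‖r ^ n * b n‖)
      (hb r hr h2).norm ?_ Metric.isOpen_ball ?_
    · intro n
      fun_prop
    · intro n w hw
      simp only [Metric.mem_ball, dist_zero_right] at hw
      simp only [norm_mul, norm_pow, Complex.norm_real, Real.norm_eq_abs, abs_of_nonneg hr]
      gcongr
  exact (this.differentiableAt (Metric.isOpen_ball.mem_nhds (by simpa using h1))).differentiableWithinAt

theorem reimG (b : ℕ → ℝ) (hb : ∀ r : ℝ, 0 ≤ r → r < 1 → Summable (fun n => r ^ n * b n))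
    (z : ℂ) (hz : ‖z‖ < 1) :
    HasSum (fun n => (z ^ n).re * b n) (G b z).re ∧ HasSum (fun n => (z ^ n).im * b n) (G b z).im := by
  have h := (summ b hb z hz).hasSum
  constructor
  · simpa [G] using Complex.hasSum_re h
  · simpa [G] using Complex.hasSum_im h

/-- four components -/
noncomputable def F (a : ℕ → ℍ[ℝ]) (c : ℍ[ℝ]) (z : ℂ) : ℂ :=
  (G (fun n => (a n).re) z - c.re) ^ 2 + (G (fun n => (a n).imI) z - c.imI) ^ 2 +
  (G (fun n => (a n).imJ) z - c.imJ) ^ 2 + (G (fun n => (a n).imK) z - c.imK) ^ 2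

theorem hasSum_comp {u : ℕ → ℍ[ℝ]} {s : ℍ[ℝ]} (h : HasSum u s) :
    HasSum (fun n => (u n).re) s.re ∧ HasSum (fun n => (u n).imI) s.imI ∧
    HasSum (fun n => (u n).imJ) s.imJ ∧ HasSum (fun n => (u n).imK) s.imK := by
  refine ⟨?_, ?_, ?_, ?_⟩
  · exact h.map (⟨⟨fun q => q.re, rfl⟩, fun _ _ => rfl⟩ : ℍ[ℝ] →+ ℝ) Quaternion.continuous_re
  · exact h.map (⟨⟨fun q => q.imI, rfl⟩, fun _ _ => rfl⟩ : ℍ[ℝ] →+ ℝ) Quaternion.continuous_imI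
  · exact h.map (⟨⟨fun q => q.imJ, rfl⟩, fun _ _ => rfl⟩ : ℍ[ℝ] →+ ℝ) Quaternion.continuous_imJ
  · exact h.map (⟨⟨fun q => q.imK, rfl⟩, fun _ _ => rfl⟩ : ℍ[ℝ] →+ ℝ) Quaternion.continuous_imK

/-- the complex line through an imaginary unit. -/
noncomputable def phi (I : ℍ[ℝ]) (z : ℂ) : ℍ[ℝ] := (z.re : ℍ[ℝ]) + (z.im : ℍ[ℝ]) * I

theorem phi_pow (I : ℍ[ℝ]) (hI : I * I = -1) (z : ℂ) (n : ℕ) : phi I z ^ n = phi I (z ^ n) := by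
  have : ∀ z, phi I z = Complex.liftAux I hI z := by
    intro z
    rw [Complex.liftAux_apply, phi, ← Quaternion.coe_mul_eq_smul]
    rfl
  rw [this, this, map_pow]

theorem sq_of (I : ℍ[ℝ]) (h0 : I.re = 0) (h1 : I.imI ^ 2 + I.imJ ^ 2 + I.imK ^ 2 = 1) :
    I * I = -1 := by
  ext <;> simp [h0] <;> linarith

theorem norm_phi (I : ℍ[ℝ]) (h0 : I.re = 0) (h1 : I.imI ^ 2 + I.imJ ^ 2 + I.imK ^ 2 = 1)
    (z : ℂ) : ‖phi I z‖ = ‖z‖ := by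
  have : ‖phi I z‖ ^ 2 = ‖z‖ ^ 2 := by
    rw [sq, ← Quaternion.normSq_eq_norm_mul_self, Quaternion.normSq_def', ← Complex.normSq_eq_norm_sq,
      Complex.normSq_apply]
    simp [phi, h0]
    linear_combination (z.im ^ 2) * h1
  exact (sq_eq_sq₀ (norm_nonneg _) (norm_nonneg _)).1 this

theorem exists_phi (q : ℍ[ℝ]) : ∃ I : ℍ[ℝ], I.re = 0 ∧ I.imI ^ 2 + I.imJ ^ 2 + I.imK ^ 2 = 1 ∧
    ∃ z, q = phi I z := by
  set s := q.imI ^ 2 + q.imJ ^ 2 + q.imK ^ 2 with hs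
  by_cases h : s = 0
  · refine ⟨mkq 0 1 0 0, rfl, by norm_num, ⟨q.re, 0⟩, ?_⟩
    have h1 : q.imI = 0 := by nlinarith [sq_nonneg q.imI, sq_nonneg q.imJ, sq_nonneg q.imK]
    have h2 : q.imJ = 0 := by nlinarith [sq_nonneg q.imI, sq_nonneg q.imJ, sq_nonneg q.imK]
    have h3 : q.imK = 0 := by nlinarith [sq_nonneg q.imI, sq_nonneg q.imJ, sq_nonneg q.imK]
    ext <;> simp [phi, h1, h2, h3]
  · have hp : 0 < s := lt_of_le_of_ne (by positivity) (Ne.symm h)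
    have ht : 0 < √s := Real.sqrt_pos.2 hp
    have hsq : √s ^ 2 = s := Real.sq_sqrt hp.le
    refine ⟨mkq 0 (q.imI / √s) (q.imJ / √s) (q.imK / √s), rfl, ?_, ⟨q.re, √s⟩, ?_⟩
    · simp only [mkq_imI, mkq_imJ, mkq_imK, div_pow, hsq]
      field_simp
      exact hs.symm
    · ext <;> simp [phi] <;> field_simp

/-- real parts of the components. -/
noncomputable def al (a : ℕ → ℍ[ℝ]) (z : ℂ) : ℍ[ℝ] := mkq (G (fun n => (a n).re) z).re (G (fun n => (a n).imI) z).re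
  (G (fun n => (a n).imJ) z).re (G (fun n => (a n).imK) z).re

/-- imaginary parts of the components. -/
noncomputable def be (a : ℕ → ℍ[ℝ]) (z : ℂ) : ℍ[ℝ] := mkq (G (fun n => (a n).re) z).im (G (fun n => (a n).imI) z).im
  (G (fun n => (a n).imJ) z).im (G (fun n => (a n).imK) z).im

theorem F_zero_iff (a : ℕ → ℍ[ℝ]) (c : ℍ[ℝ]) (z : ℂ) : F a c z = 0 ↔
    (((al a z).re - c.re) ^ 2 + ((al a z).imI - c.imI) ^ 2 + ((al a z).imJ - c.imJ) ^ 2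
      + ((al a z).imK - c.imK) ^ 2 =
     (be a z).re ^ 2 + (be a z).imI ^ 2 + (be a z).imJ ^ 2 + (be a z).imK ^ 2) ∧
    ((al a z).re - c.re) * (be a z).re + ((al a z).imI - c.imI) * (be a z).imI
      + ((al a z).imJ - c.imJ) * (be a z).imJ + ((al a z).imK - c.imK) * (be a z).imK = 0 := by
  simp only [Complex.ext_iff, F, al, be, mkq_re, mkq_imI, mkq_imJ, mkq_imK, sq, Complex.add_re, Complex.add_im, Complex.mul_re,
    Complex.mul_im, Complex.sub_re, Complex.sub_im, Complex.ofReal_re, Complex.ofReal_im,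
    Complex.zero_re, Complex.zero_im]
  constructor
  · rintro ⟨h1, h2⟩
    constructor <;> linarith
  · rintro ⟨h1, h2⟩
    constructor <;> linarith

theorem comps (f : ℍ[ℝ] → ℍ[ℝ]) (a : ℕ → ℍ[ℝ])
    (hf : ∀ q ∈ Metric.ball (0 : ℍ[ℝ]) 1, HasSum (fun n : ℕ => q ^ n * a n) (f q))
    : (∀ r : ℝ, 0 ≤ r → r < 1 → Summable (fun n => r ^ n * (a n).re)) ∧
    (∀ r : ℝ, 0 ≤ r → r < 1 → Summable (fun n => r ^ n * (a n).imI)) ∧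
    (∀ r : ℝ, 0 ≤ r → r < 1 → Summable (fun n => r ^ n * (a n).imJ)) ∧
    (∀ r : ℝ, 0 ≤ r → r < 1 → Summable (fun n => r ^ n * (a n).imK)) := by
  have key : ∀ r : ℝ, 0 ≤ r → r < 1 → HasSum (fun n : ℕ => ((r ^ n : ℝ) : ℍ[ℝ]) * a n) (f r) := by
    intro r h0 h1
    have := hf r (by simpa [abs_of_nonneg h0] using h1)
    simpa using this
  refine ⟨?_, ?_, ?_, ?_⟩ <;> intro r h0 h1 <;>
    obtain ⟨k1, k2, k3, k4⟩ := hasSum_comp (key r h0 h1)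
  · simpa only [Quaternion.coe_mul_eq_smul, Quaternion.re_smul, smul_eq_mul] using k1.summable
  · simpa only [Quaternion.coe_mul_eq_smul, Quaternion.imI_smul, smul_eq_mul] using k2.summable
  · simpa only [Quaternion.coe_mul_eq_smul, Quaternion.imJ_smul, smul_eq_mul] using k3.summable
  · simpa only [Quaternion.coe_mul_eq_smul, Quaternion.imK_smul, smul_eq_mul] using k4.summable

theorem f_phi (f : ℍ[ℝ] → ℍ[ℝ]) (a : ℕ → ℍ[ℝ])
    (hf : ∀ q ∈ Metric.ball (0 : ℍ[ℝ]) 1, HasSum (fun n : ℕ => q ^ n * a n) (f q))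
    (I : ℍ[ℝ]) (h0 : I.re = 0) (h1 : I.imI ^ 2 + I.imJ ^ 2 + I.imK ^ 2 = 1)
    (z : ℂ) (hz : ‖z‖ < 1) : f (phi I z) = al a z + I * be a z := by
  have h := hf (phi I z) (by simpa [norm_phi I h0 h1] using hz)
  obtain ⟨b0, b1, b2, b3⟩ := comps f a hf
  simp only [phi_pow I (sq_of I h0 h1)] at h
  obtain ⟨k0, k1, k2, k3⟩ := hasSum_comp h
  obtain ⟨r0, i0⟩ := reimG _ b0 z hz
  obtain ⟨r1, i1⟩ := reimG _ b1 z hz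
  obtain ⟨r2, i2⟩ := reimG _ b2 z hz
  obtain ⟨r3, i3⟩ := reimG _ b3 z hz
  ext
  · refine k0.unique ?_
    convert r0.add (((i1.mul_left (-I.imI)).add (i2.mul_left (-I.imJ))).add (i3.mul_left (-I.imK))) using 1
    · funext n; simp [phi, h0]; ring
    · simp [al, be, h0]; ring
  · refine k1.unique ?_
    convert r1.add (((i0.mul_left (I.imI)).add (i3.mul_left (I.imJ))).add (i2.mul_left (-I.imK))) using 1
    · funext n; simp [phi, h0]; ring
    · simp [al, be, h0]; ring
  · refine k2.unique ?_
    convert r2.add (((i3.mul_left (-I.imI)).add (i0.mul_left (I.imJ))).add (i1.mul_left (I.imK))) using 1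
    · funext n; simp [phi, h0]; ring
    · simp [al, be, h0]
  · refine k3.unique ?_
    convert r3.add (((i2.mul_left (I.imI)).add (i1.mul_left (-I.imJ))).add (i0.mul_left (I.imK))) using 1
    · funext n; simp [phi, h0]; ring
    · simp [al, be, h0]; ring

theorem F_zero_of (f : ℍ[ℝ] → ℍ[ℝ]) (a : ℕ → ℍ[ℝ])
    (hf : ∀ q ∈ Metric.ball (0 : ℍ[ℝ]) 1, HasSum (fun n : ℕ => q ^ n * a n) (f q))
    (c p : ℍ[ℝ]) (hp : ‖p‖ < 1) (hc : f p = c) :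
    ∃ z : ℂ, ‖z‖ < 1 ∧ F a c z = 0 := by
  obtain ⟨I, h0, h1, z, rfl⟩ := exists_phi p
  rw [norm_phi I h0 h1] at hp
  refine ⟨z, hp, ?_⟩
  rw [F_zero_iff, ← hc, f_phi f a hf I h0 h1 z hp]
  generalize al a z = A
  generalize be a z = B
  simp only [Quaternion.re_add, Quaternion.imI_add, Quaternion.imJ_add, Quaternion.imK_add,
    Quaternion.re_mul, Quaternion.imI_mul, Quaternion.imJ_mul, Quaternion.imK_mul, h0]
  constructor
  · linear_combination (B.re ^ 2 + B.imI ^ 2 + B.imJ ^ 2 + B.imK ^ 2) * h1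
  · ring

theorem of_F_zero (f : ℍ[ℝ] → ℍ[ℝ]) (a : ℕ → ℍ[ℝ])
    (hf : ∀ q ∈ Metric.ball (0 : ℍ[ℝ]) 1, HasSum (fun n : ℕ => q ^ n * a n) (f q))
    (c : ℍ[ℝ]) (z : ℂ) (hz : ‖z‖ < 1) (h : F a c z = 0) :
    ∃ u : ℍ[ℝ], ‖u‖ = ‖z‖ ∧ f u = c := by
  rw [F_zero_iff] at h
  have hA := f_phi f a hf
  suffices ∃ I : ℍ[ℝ], I.re = 0 ∧ I.imI ^ 2 + I.imJ ^ 2 + I.imK ^ 2 = 1 ∧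
      al a z + I * be a z = c by
    obtain ⟨I, h0, h1, h2⟩ := this
    exact ⟨phi I z, norm_phi I h0 h1 z, (hA I h0 h1 z hz).trans h2⟩
  obtain ⟨h1, h2⟩ := h
  generalize al a z = A at *
  generalize be a z = B at *
  obtain ⟨D, rfl⟩ : ∃ D, A = c + D := ⟨A - c, by abel⟩
  simp only [Quaternion.re_add, Quaternion.imI_add, Quaternion.imJ_add, Quaternion.imK_add,
    add_sub_cancel_left] at h1 h2
  by_cases hB : B = 0
  · subst hB
    have hD : D = 0 := by
      rw [← Quaternion.normSq_eq_zero, Quaternion.normSq_def', h1]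
      simp
    exact ⟨mkq 0 1 0 0, rfl, by norm_num, by simp [hD]⟩
  · have hn : Quaternion.normSq B ≠ 0 := by simpa [Quaternion.normSq_eq_zero] using hB
    have hre : (-(D * B⁻¹)).re = 0 := by
      rw [Quaternion.inv_def]
      simp
      right
      linarith
    refine ⟨-(D * B⁻¹), hre, ?_, ?_⟩
    · have e : Quaternion.normSq (-(D * B⁻¹)) = 1 := by
        rw [Quaternion.normSq_neg, map_mul, Quaternion.normSq_inv, Quaternion.normSq_def' D, h1,
          ← Quaternion.normSq_def' B]
        exact mul_inv_cancel₀ hn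
      rw [Quaternion.normSq_def', hre] at e
      linarith
    · rw [neg_mul, mul_assoc, inv_mul_cancel₀ hB]
      simp

theorem diffF (f : ℍ[ℝ] → ℍ[ℝ]) (a : ℕ → ℍ[ℝ])
    (hf : ∀ q ∈ Metric.ball (0 : ℍ[ℝ]) 1, HasSum (fun n : ℕ => q ^ n * a n) (f q))
    (c : ℍ[ℝ]) : DifferentiableOn ℂ (F a c) (Metric.ball 0 1) := by
  obtain ⟨b0, b1, b2, b3⟩ := comps f a hf
  have := diffG _ b0
  have := diffG _ b1
  have := diffG _ b2
  have := diffG _ b3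
  unfold F
  fun_prop

theorem contF (f : ℍ[ℝ] → ℍ[ℝ]) (a : ℕ → ℍ[ℝ])
    (hf : ∀ q ∈ Metric.ball (0 : ℍ[ℝ]) 1, HasSum (fun n : ℕ => q ^ n * a n) (f q))
    (z : ℂ) (hz : ‖z‖ < 1) (c : ℍ[ℝ]) :
    ContinuousAt (fun p : ℍ[ℝ] × ℂ => F a p.1 p.2) (c, z) := by
  obtain ⟨b0, b1, b2, b3⟩ := comps f a hf
  have hm : Metric.ball (0 : ℂ) 1 ∈ nhds z := Metric.isOpen_ball.mem_nhds (by simpa using hz)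
  have key : ∀ b, DifferentiableOn ℂ (G b) (Metric.ball 0 1) →
      ContinuousAt (fun p : ℍ[ℝ] × ℂ => G b p.2) (c, z) := fun b h =>
    ContinuousAt.comp (f := fun p : ℍ[ℝ] × ℂ => p.2) (g := G b) (x := (c, z)) (h.differentiableAt hm).continuousAt continuousAt_snd
  have h0 := key _ (diffG _ b0)
  have h1 := key _ (diffG _ b1)
  have h2 := key _ (diffG _ b2)
  have h3 := key _ (diffG _ b3)
  have c0 : Continuous (fun p : ℍ[ℝ] × ℂ => (p.1.re : ℂ)) :=
    Complex.continuous_ofReal.comp (Quaternion.continuous_re.comp continuous_fst)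
  have c1 : Continuous (fun p : ℍ[ℝ] × ℂ => (p.1.imI : ℂ)) :=
    Complex.continuous_ofReal.comp (Quaternion.continuous_imI.comp continuous_fst)
  have c2 : Continuous (fun p : ℍ[ℝ] × ℂ => (p.1.imJ : ℂ)) :=
    Complex.continuous_ofReal.comp (Quaternion.continuous_imJ.comp continuous_fst)
  have c3 : Continuous (fun p : ℍ[ℝ] × ℂ => (p.1.imK : ℂ)) :=
    Complex.continuous_ofReal.comp (Quaternion.continuous_imK.comp continuous_fst)
  unfold F
  exact ((((h0.sub c0.continuousAt).pow 2).add ((h1.sub c1.continuousAt).pow 2)).add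
    ((h2.sub c2.continuousAt).pow 2)).add ((h3.sub c3.continuousAt).pow 2)

theorem key (f : ℍ[ℝ] → ℍ[ℝ]) (a : ℕ → ℍ[ℝ])
    (hf : ∀ q ∈ Metric.ball (0 : ℍ[ℝ]) 1, HasSum (fun n : ℕ => q ^ n * a n) (f q))
    (hinj : Set.InjOn f (Metric.ball 0 1)) (w p : ℍ[ℝ]) (hp : ‖p‖ < 1) (hw : f p = w) :
    ∃ r < 1, ∀ᶠ c in nhds w, ∃ u : ℍ[ℝ], ‖u‖ ≤ r ∧ f u = c := by
  obtain ⟨z₀, hz₀, hF⟩ := F_zero_of f a hf w p hp hw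
  have hm : Metric.ball (0 : ℂ) 1 ∈ nhds z₀ := Metric.isOpen_ball.mem_nhds (by simpa using hz₀)
  have hz₀' : z₀ ∈ Metric.ball (0 : ℂ) 1 := by simpa using hz₀
  have han : ∀ c, AnalyticOnNhd ℂ (F a c) (Metric.ball 0 1) := fun c =>
    (diffF f a hf c).analyticOnNhd Metric.isOpen_ball
  have hpre : IsPreconnected (Metric.ball (0 : ℂ) 1) := (convex_ball 0 1).isPreconnected
  have hne : ∀ᶠ z in nhdsWithin z₀ {z₀}ᶜ, F a w z ≠ 0 := by
    rcases (han w z₀ hz₀').eventually_eq_zero_or_eventually_ne_zero with h | h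
    · exfalso
      have h' := (han w).eqOn_zero_of_preconnected_of_eventuallyEq_zero hpre hz₀' h
      obtain ⟨u, hu, hfu⟩ := of_F_zero f a hf w 0 (by simp) (h' (by simp))
      obtain ⟨v, hv, hfv⟩ := of_F_zero f a hf w (1/2) (by norm_num) (h' (by norm_num))
      have : u = v := hinj (by rw [mem_ball_zero_iff, hu]; norm_num)
        (by rw [mem_ball_zero_iff, hv]; norm_num) (hfu.trans hfv.symm)
      rw [this, hv] at hu
      norm_num at hu
    · exact h
  rw [eventually_nhdsWithin_iff] at hne
  obtain ⟨ρ, hρ, hball⟩ := Metric.eventually_nhds_iff_ball.1 (hne.and hm)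
  set δ := ρ / 2 with hδ
  have hδ0 : 0 < δ := by positivity
  have hsub : ∀ z ∈ Metric.closedBall z₀ δ, z ∈ Metric.ball z₀ ρ := fun z hz =>
    Metric.closedBall_subset_ball (by linarith) hz
  have hKd : Metric.closedBall z₀ δ ⊆ Metric.ball (0 : ℂ) 1 := fun z hz => (hball z (hsub z hz)).2
  have hS : ∀ z ∈ Metric.sphere z₀ δ, F a w z ≠ 0 := fun z hz =>
    (hball z (hsub z (Metric.sphere_subset_closedBall hz))).1
      (by rintro rfl; simp at hz; linarith)
  have hcS : IsCompact (Metric.sphere z₀ δ) := isCompact_sphere _ _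
  have hSn : (Metric.sphere z₀ δ).Nonempty := NormedSpace.sphere_nonempty.2 hδ0.le
  have hcon : ContinuousOn (fun z => ‖F a w z‖) (Metric.sphere z₀ δ) :=
    ((diffF f a hf w).continuousOn.mono (Metric.sphere_subset_closedBall.trans hKd)).norm
  obtain ⟨zm, hzm, hmin⟩ := hcS.exists_isMinOn hSn hcon
  set m := ‖F a w zm‖ with hmdef
  have hm0 : 0 < m := norm_pos_iff.2 (hS zm hzm)
  obtain ⟨zM, hzM, hmax⟩ := (isCompact_closedBall z₀ δ).exists_isMaxOn
    (Metric.nonempty_closedBall.2 hδ0.le) continuous_norm.continuousOn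
  refine ⟨‖zM‖, by simpa using hKd hzM, ?_⟩
  have hfix : ∀ z, ‖z‖ < 1 → ContinuousAt (fun p : ℍ[ℝ] × ℂ => F a p.1 z₀) (w, z) := fun z _ =>
    ContinuousAt.comp (f := fun p : ℍ[ℝ] × ℂ => (p.1, z₀)) (g := fun p : ℍ[ℝ] × ℂ => F a p.1 p.2)
      (contF f a hf z₀ hz₀ w) (by fun_prop)
  have ev1 : ∀ᶠ c in nhds w, ∀ z ∈ Metric.sphere z₀ δ, m / 2 < ‖F a c z - F a c z₀‖ := by
    refine hcS.eventually_forall_of_forall_eventually ?_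
    intro z hz
    have hz1 : ‖z‖ < 1 := by simpa using hKd (Metric.sphere_subset_closedBall hz)
    have := ((contF f a hf z hz1 w).sub (hfix z hz1)).norm
    refine this.eventually (lt_mem_nhds ?_)
    simp only [Pi.sub_apply, hF, sub_zero]
    have : m ≤ ‖F a w z‖ := hmin hz
    linarith
  have ev2 : ∀ᶠ c in nhds w, ‖F a c z₀‖ < m / 4 := by
    have h : ContinuousAt (fun c => F a c z₀) w :=
      ContinuousAt.comp (f := fun c : ℍ[ℝ] => (c, z₀)) (g := fun p : ℍ[ℝ] × ℂ => F a p.1 p.2)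
      (contF f a hf z₀ hz₀ w) (by fun_prop)
    refine h.norm.eventually (gt_mem_nhds ?_)
    simp only [hF, norm_zero]
    positivity
  filter_upwards [ev1, ev2] with c h1 h2
  have hfreq : ∃ᶠ z in nhds z₀, F a c z ≠ F a c z₀ := by
    intro hcon
    simp only [not_not] at hcon
    have he := (han c).eqOn_of_preconnected_of_eventuallyEq
      (analyticOnNhd_const (v := F a c z₀)) hpre hz₀' hcon
    have := h1 zm hzm
    have e : F a c zm = F a c z₀ := he (hKd (Metric.sphere_subset_closedBall hzm))
    rw [e, sub_self, norm_zero] at this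
    linarith
  have hd : DiffContOnCl ℂ (F a c) (Metric.ball z₀ δ) :=
    DifferentiableOn.diffContOnCl ((diffF f a hf c).mono
      (Metric.closure_ball_subset_closedBall.trans hKd))
  have himg := hd.ball_subset_image_closedBall hδ0 (fun z hz => (h1 z hz).le) hfreq
  obtain ⟨z, hz, hz0⟩ := himg (show (0 : ℂ) ∈ _ by
    rw [Metric.mem_ball, dist_zero_left]; linarith)
  obtain ⟨u, hu, hfu⟩ := of_F_zero f a hf c z (by simpa using hKd hz) hz0
  exact ⟨u, hu.le.trans (hmax hz), hfu⟩

end BLRB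

/-- If `f : 𝔹 → 𝔹` is regular and bijective, then `|f(q)| → 1` as `q` tends to any boundary
point `ν` (with `|ν| = 1`) from within the ball. -/
theorem boundary_limit_of_regular_bijection (f : ℍ[ℝ] → ℍ[ℝ]) (a : ℕ → ℍ[ℝ])
    (hf : ∀ q ∈ Metric.ball (0 : ℍ[ℝ]) 1, HasSum (fun n : ℕ => q ^ n * a n) (f q))
    (hbij : Set.BijOn f (Metric.ball 0 1) (Metric.ball 0 1)) :
    ∀ ν : ℍ[ℝ], ‖ν‖ = 1 → ∀ q : ℕ → ℍ[ℝ], (∀ n, q n ∈ Metric.ball (0 : ℍ[ℝ]) 1) →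
      Filter.Tendsto q Filter.atTop (nhds ν) →
      Filter.Tendsto (fun n => ‖f (q n)‖) Filter.atTop (nhds 1) := by
  intro ν hν q hq hlim
  have hlt : ∀ n, ‖f (q n)‖ < 1 := fun n => by simpa using hbij.mapsTo (hq n)
  rw [tendsto_order]
  refine ⟨fun s hs => ?_, fun s hs => Filter.Eventually.of_forall fun n => (hlt n).trans hs⟩
  by_contra hcon
  have hfr : ∃ᶠ n in Filter.atTop, f (q n) ∈ Metric.closedBall (0 : ℍ[ℝ]) s := by
    refine (Filter.not_eventually.1 hcon).mono fun n hn => ?_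
    simpa using hn
  obtain ⟨w, hw, hcl⟩ := (isCompact_closedBall (0 : ℍ[ℝ]) s).exists_mapClusterPt_of_frequently hfr
  have hw1 : w ∈ Metric.ball (0 : ℍ[ℝ]) 1 := Metric.closedBall_subset_ball hs hw
  obtain ⟨p, hp, hpw⟩ := hbij.surjOn hw1
  obtain ⟨r, hr, hev⟩ := BLRB.key f a hf hbij.injOn w p (by simpa using hp) hpw
  have h1 := hcl.frequently hev
  have h2 : ∀ᶠ n in Filter.atTop, r < ‖q n‖ :=
    hlim.norm.eventually (lt_mem_nhds (by rw [hν]; exact hr))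
  obtain ⟨n, ⟨u, hu, hfu⟩, hn⟩ := (h1.and_eventually h2).exists
  have : u = q n := hbij.injOn (by rw [mem_ball_zero_iff]; linarith) (hq n) hfu
  rw [this] at hu
  linarith
end

section
/- Let f : 𝔹 → 𝔹 be regular (f(q) = ∑_{n≥0} qⁿaₙ converging on 𝔹, with f(𝔹) ⊆ 𝔹) and suppose f is a bijection of 𝔹 onto 𝔹 with f(0) = 0. Then there exists u ∈ ℍ with |u| = 1 such that f(q) = qu for all q ∈ 𝔹. -/
open Quaternion
noncomputable section
theorem q_cnorm (z : ℂ) : ‖(z : ℍ[ℝ])‖ = ‖z‖ := by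
  have h : ‖(z : ℍ[ℝ])‖ * ‖(z : ℍ[ℝ])‖ = ‖z‖ * ‖z‖ := by
    rw [← Quaternion.normSq_eq_norm_mul_self, Quaternion.normSq_def', Complex.norm_mul_self_eq_normSq,
      Complex.normSq_apply]
    simp; ring
  exact (mul_self_inj (norm_nonneg _) (norm_nonneg _)).1 h

@[reducible] def qNS : NormedSpace ℂ ℍ[ℝ] where
  smul z v := (z : ℍ[ℝ]) * v
  one_smul v := by change ((1 : ℂ) : ℍ[ℝ]) * v = v; simp
  mul_smul z w v := by change ((z * w : ℂ) : ℍ[ℝ]) * v = z * (w * v); simp [mul_assoc]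
  smul_zero z := mul_zero _
  smul_add z v w := mul_add _ _ _
  add_smul z w v := by change ((z + w : ℂ) : ℍ[ℝ]) * v = z * v + w * v; simp [add_mul]
  zero_smul v := by change ((0 : ℂ) : ℍ[ℝ]) * v = 0; simp
  norm_smul_le z v := by change ‖(z : ℍ[ℝ]) * v‖ ≤ _; rw [norm_mul, q_cnorm]
attribute [local instance] qNS

theorem q_smul (z : ℂ) (v : ℍ[ℝ]) : z • v = (z : ℍ[ℝ]) * v := rfl
theorem q_tower : IsScalarTower ℝ ℂ ℍ[ℝ] := ⟨fun r z v => by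
  rw [q_smul, q_smul]
  have : ((r • z : ℂ) : ℍ[ℝ]) = r • (z : ℍ[ℝ]) := map_smul (Quaternion.ofComplex) r z
  rw [this, smul_mul_assoc]⟩

theorem q_fin : FiniteDimensional ℂ ℍ[ℝ] := by
  have := q_tower
  exact Module.Finite.of_restrictScalars_finite ℝ ℂ ℍ[ℝ]
theorem q_cinj {z w : ℂ} (h : (z : ℍ[ℝ]) = w) : z = w := by
  have h1 : (z : ℍ[ℝ]).re = (w : ℍ[ℝ]).re := by rw [h]
  have h2 : (z : ℍ[ℝ]).imI = (w : ℍ[ℝ]).imI := by rw [h]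
  exact Complex.ext h1 h2

theorem q_strict : @StrictConvexSpace ℝ ℍ[ℝ] _ _ _ (NormedSpace.complexToReal) := by
  refine @StrictConvexSpace.of_norm_add ℍ[ℝ] _ (NormedSpace.complexToReal) ?_
  intro x y hx hy h
  have := parallelogram_law_with_norm ℝ x y
  rw [hx, hy, h] at this
  have h1 : ‖x - y‖ = 0 := by nlinarith
  have h2 : x = y := sub_eq_zero.mp (norm_eq_zero.mp h1)
  rw [h2]
  exact Or.inr (Or.inr ⟨1, 1, one_pos, one_pos, rfl⟩)

def qR (b : ℍ[ℝ]) : ℍ[ℝ] →L[ℂ] ℍ[ℝ] :=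
  LinearMap.mkContinuous
    { toFun := fun v => v * b
      map_add' := fun x y => add_mul x y b
      map_smul' := fun z v => by simp [q_smul, mul_assoc] } ‖b‖
    (fun v => by simp [norm_mul, mul_comm])

theorem qR_apply (b v : ℍ[ℝ]) : qR b v = v * b := rfl
theorem qR_norm (b : ℍ[ℝ]) : ‖qR b‖ ≤ ‖b‖ := LinearMap.mkContinuous_norm_le _ (norm_nonneg _) _

def qH (b : ℕ → ℍ[ℝ]) (z : ℂ) : ℍ[ℝ] →L[ℂ] ℍ[ℝ] := ∑' n, z ^ n • qR (b n)

theorem q_summ {b : ℕ → ℍ[ℝ]} {h : ℍ[ℝ] → ℍ[ℝ]}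
    (hb : ∀ q ∈ Metric.ball (0 : ℍ[ℝ]) 1, HasSum (fun n : ℕ => q ^ n * b n) (h q))
    {r : ℝ} (hr0 : 0 ≤ r) (hr : r < 1) : Summable (fun n => r ^ n * ‖b n‖) := by
  obtain ⟨s, hrs, hs⟩ := exists_between hr
  have hs0 : 0 < s := hr0.trans_lt hrs
  have h1 := (hb (s : ℍ[ℝ]) (by simpa [abs_of_pos hs0] using hs)).summable.tendsto_atTop_zero
  have h2 : Filter.Tendsto (fun n => s ^ n * ‖b n‖) Filter.atTop (nhds 0) := by
    have := h1.norm
    simpa [norm_mul, norm_pow, abs_of_pos hs0] using this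
  have h3 : ∀ᶠ n in Filter.atTop, s ^ n * ‖b n‖ ≤ 1 :=
    (h2.eventually_lt_const one_pos).mono fun _ => le_of_lt
  refine Summable.of_norm_bounded_eventually_nat (g := fun n => (r / s) ^ n)
    (summable_geometric_of_lt_one (by positivity) ((div_lt_one hs0).2 hrs)) ?_
  filter_upwards [h3] with n hn
  have hsn : 0 < s ^ n := by positivity
  rw [Real.norm_of_nonneg (by positivity), div_pow, le_div_iff₀ hsn]
  have : 0 ≤ r ^ n := by positivity
  nlinarith

theorem q_hasSum {b : ℕ → ℍ[ℝ]} {h : ℍ[ℝ] → ℍ[ℝ]}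
    (hb : ∀ q ∈ Metric.ball (0 : ℍ[ℝ]) 1, HasSum (fun n : ℕ => q ^ n * b n) (h q))
    {z : ℂ} (hz : ‖z‖ < 1) : HasSum (fun n => z ^ n • qR (b n)) (qH b z) := by
  have := q_fin
  refine Summable.hasSum (Summable.of_norm_bounded (q_summ hb (norm_nonneg z) hz) fun n => ?_)
  rw [norm_smul, norm_pow]
  gcongr
  exact qR_norm _

theorem q_diff {b : ℕ → ℍ[ℝ]} {h : ℍ[ℝ] → ℍ[ℝ]}
    (hb : ∀ q ∈ Metric.ball (0 : ℍ[ℝ]) 1, HasSum (fun n : ℕ => q ^ n * b n) (h q))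
    {z : ℂ} (hz : ‖z‖ < 1) : DifferentiableAt ℂ (qH b) z := by
  obtain ⟨s, hrs, hs⟩ := exists_between hz
  have hs0 : 0 < s := (norm_nonneg z).trans_lt hrs
  have : DifferentiableOn ℂ (fun w : ℂ => ∑' n : ℕ, w ^ n • qR (b n)) (Metric.ball 0 s) := by
    refine Complex.differentiableOn_tsum_of_summable_norm (q_summ hb hs0.le hs)
      (fun n => by fun_prop) Metric.isOpen_ball fun n w hw => ?_
    rw [norm_smul, norm_pow]
    have : ‖w‖ ≤ s := by simpa using (Metric.mem_ball.1 hw).le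
    gcongr
    exact qR_norm _
  exact this.differentiableAt (Metric.isOpen_ball.mem_nhds (by simpa using hrs))

theorem q_apply {b : ℕ → ℍ[ℝ]} {h : ℍ[ℝ] → ℍ[ℝ]}
    (hb : ∀ q ∈ Metric.ball (0 : ℍ[ℝ]) 1, HasSum (fun n : ℕ => q ^ n * b n) (h q))
    {z : ℂ} (hz : ‖z‖ < 1) (v q : ℍ[ℝ]) (hq : ‖q‖ < 1) (hv : (z : ℍ[ℝ]) * v = v * q) :
    qH b z v = v * h q := by
  have h1 : HasSum (fun n => (z ^ n • qR (b n)) v) (qH b z v) :=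
    (q_hasSum hb hz).mapL (ContinuousLinearMap.apply ℂ ℍ[ℝ] v)
  have h2 := (hb q (by simpa using hq)).mul_left v
  have e : (fun n => (z ^ n • qR (b n)) v) = fun n => v * (q ^ n * b n) := by
    funext n
    have h3 : ((z ^ n : ℂ) : ℍ[ℝ]) = (z : ℍ[ℝ]) ^ n := map_pow (Quaternion.ofComplex) z n
    have h4 : SemiconjBy v q (z : ℍ[ℝ]) := hv.symm
    have h5 := (h4.pow_right n).eq
    rw [smul_apply, qR_apply, q_smul, h3, ← mul_assoc, ← mul_assoc, h5]
  rw [e] at h1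
  exact h1.unique h2

theorem q_cont {b : ℕ → ℍ[ℝ]} {h : ℍ[ℝ] → ℍ[ℝ]}
    (hb : ∀ q ∈ Metric.ball (0 : ℍ[ℝ]) 1, HasSum (fun n : ℕ => q ^ n * b n) (h q))
    : ContinuousOn h (Metric.ball 0 1) := by
  intro q hq
  obtain ⟨s, hrs, hs⟩ := exists_between (show ‖q‖ < 1 by simpa using hq)
  have hs0 : 0 < s := (norm_nonneg q).trans_lt hrs
  have h1 : ContinuousOn (fun w => ∑' n, w ^ n * b n) (Metric.ball 0 s) := by
    refine continuousOn_tsum (fun n => by fun_prop) (q_summ hb hs0.le hs) fun n w hw => ?_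
    rw [norm_mul, norm_pow]
    have : ‖w‖ ≤ s := by simpa using (Metric.mem_ball.1 hw).le
    gcongr
  have h2 := h1.continuousAt (Metric.isOpen_ball.mem_nhds (show q ∈ _ by simpa using hrs))
  refine (h2.congr ?_).continuousWithinAt
  filter_upwards [Metric.isOpen_ball.mem_nhds hq] with w hw
  exact (hb w hw).tsum_eq

theorem q_conj (q : ℍ[ℝ]) : ∃ (z : ℂ) (v : ℍ[ℝ]), v ≠ 0 ∧ (z : ℍ[ℝ]) * v = v * q := by
  by_cases hq : ∃ z : ℂ, (z : ℍ[ℝ]) = q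
  · obtain ⟨z, rfl⟩ := hq
    exact ⟨z, 1, one_ne_zero, by simp⟩
  · set y := Real.sqrt (q.imI ^ 2 + q.imJ ^ 2 + q.imK ^ 2) with hy
    have hy2 : y ^ 2 = q.imI ^ 2 + q.imJ ^ 2 + q.imK ^ 2 := Real.sq_sqrt (by positivity)
    obtain ⟨v, v0, v1, v2, v3⟩ : ∃ v : ℍ[ℝ], v.re = y + q.imI ∧ v.imI = 0 ∧ v.imJ = q.imK ∧
      v.imK = -q.imJ := ⟨⟨y + q.imI, 0, q.imK, -q.imJ⟩, rfl, rfl, rfl, rfl⟩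
    refine ⟨⟨q.re, y⟩, v, ?_, ?_⟩
    · intro h0
      apply hq
      simp [h0] at v2 v3
      refine ⟨⟨q.re, q.imI⟩, ?_⟩
      ext <;> simp [← v2, v3]
    · ext <;> simp [v0, v1, v2, v3] <;> nlinarith

theorem q_norm_eq {z : ℂ} {v q : ℍ[ℝ]} (hv0 : v ≠ 0) (hv : (z : ℍ[ℝ]) * v = v * q) : ‖z‖ = ‖q‖ := by
  have := congrArg norm hv
  rw [norm_mul, norm_mul, mul_comm] at this
  rw [← q_cnorm]
  exact mul_left_cancel₀ (norm_ne_zero_iff.2 hv0) this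

theorem q_conj' (z : ℂ) {v : ℍ[ℝ]} (hv : v ≠ 0) : (z : ℍ[ℝ]) * v = v * (v⁻¹ * z * v) := by
  rw [mul_assoc v⁻¹, mul_inv_cancel_left₀ hv]

theorem q_min {b : ℕ → ℍ[ℝ]} {h : ℍ[ℝ] → ℍ[ℝ]}
    (hb : ∀ q ∈ Metric.ball (0 : ℍ[ℝ]) 1, HasSum (fun n : ℕ => q ^ n * b n) (h q))
    {ρ m : ℝ} (hρ0 : 0 < ρ) (hρ : ρ < 1) (hm : 0 < m) (hne : ∀ q, ‖q‖ ≤ ρ → h q ≠ 0)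
    (hle : ∀ q, ‖q‖ = ρ → m ≤ ‖h q‖) (q : ℍ[ℝ]) (hq : ‖q‖ ≤ ρ) : m ≤ ‖h q‖ := by
  have := q_fin
  have hunit : ∀ z : ℂ, ‖z‖ ≤ ρ → IsUnit (qH b z) := by
    intro z hz
    rw [ContinuousLinearMap.isUnit_iff_bijective]
    have hinj : Function.Injective (qH b z) := by
      rw [injective_iff_map_eq_zero]
      intro v hv
      by_contra hv0
      have hc := q_conj' z hv0
      have hn := q_norm_eq hv0 hc
      rw [q_apply hb (hz.trans_lt hρ) v _ (by linarith) hc] at hv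
      exact (mul_ne_zero hv0 (hne _ (by linarith))) hv
    exact ⟨hinj, (LinearMap.injective_iff_surjective (f := (qH b z : ℍ[ℝ] →ₗ[ℂ] ℍ[ℝ]))).1 hinj⟩
  have hcl : closure (Metric.ball (0 : ℂ) ρ) = Metric.closedBall 0 ρ := closure_ball _ hρ0.ne'
  have hd : DiffContOnCl ℂ (fun z => Ring.inverse (qH b z)) (Metric.ball 0 ρ) := by
    apply DifferentiableOn.diffContOnCl
    rw [hcl]
    intro z hz
    have hz' : ‖z‖ ≤ ρ := by simpa using hz
    obtain ⟨u, hu⟩ := hunit z hz'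
    have h1 : DifferentiableAt ℂ Ring.inverse (qH b z) := by
      rw [← hu]; exact differentiableAt_inverse u.isUnit
    exact (h1.comp z (q_diff hb (hz'.trans_lt hρ))).differentiableWithinAt
  have hbd : ∀ z ∈ frontier (Metric.ball (0 : ℂ) ρ), ‖Ring.inverse (qH b z)‖ ≤ m⁻¹ := by
    intro z hz
    rw [frontier_ball _ hρ0.ne'] at hz
    have hz' : ‖z‖ = ρ := by simpa using hz
    refine ContinuousLinearMap.opNorm_le_bound _ (by positivity) fun w => ?_
    have h1 : qH b z (Ring.inverse (qH b z) w) = w := by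
      have := Ring.mul_inverse_cancel _ (hunit z hz'.le)
      exact congrArg (fun T : ℍ[ℝ] →L[ℂ] ℍ[ℝ] => T w) this
    set v := Ring.inverse (qH b z) w with hv
    by_cases hv0 : v = 0
    · rw [hv0, norm_zero]; positivity
    have hc := q_conj' z hv0
    have hn := q_norm_eq hv0 hc
    rw [q_apply hb (by linarith) v _ (by linarith) hc] at h1
    rw [← h1, norm_mul, inv_mul_eq_div, le_div_iff₀ hm]
    exact mul_le_mul_of_nonneg_left (hle _ (by linarith)) (norm_nonneg _)
  obtain ⟨z, v, hv0, hc⟩ := q_conj q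
  have hn := q_norm_eq hv0 hc
  have h2 := Complex.norm_le_of_forall_mem_frontier_norm_le Metric.isBounded_ball hd hbd
    (z := z) (by rw [hcl]; simp; linarith)
  have h1 : Ring.inverse (qH b z) (qH b z v) = v := by
    have := Ring.inverse_mul_cancel _ (hunit z (by linarith))
    exact congrArg (fun T : ℍ[ℝ] →L[ℂ] ℍ[ℝ] => T v) this
  have h3 := ContinuousLinearMap.le_of_opNorm_le _ h2 (qH b z v)
  rw [h1, q_apply hb (by linarith) v q (by linarith) hc, norm_mul, inv_mul_eq_div,
    le_div_iff₀ hm] at h3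
  exact le_of_mul_le_mul_left h3 (norm_pos_iff.2 hv0)

/-- Properness. -/
theorem q_proper (f : ℍ[ℝ] → ℍ[ℝ]) (a : ℕ → ℍ[ℝ])
    (hf : ∀ q ∈ Metric.ball (0 : ℍ[ℝ]) 1, HasSum (fun n : ℕ => q ^ n * a n) (f q))
    (hbij : Set.BijOn f (Metric.ball 0 1) (Metric.ball 0 1)) {c : ℝ} (hc : c < 1) :
    ∃ ρ < 1, ∀ q, ρ ≤ ‖q‖ → ‖q‖ < 1 → c ≤ ‖f q‖ := by
  by_contra! hcon
  have hex : ∀ n : ℕ, ∃ q, 1 - 1 / ((n : ℝ) + 1) ≤ ‖q‖ ∧ ‖q‖ < 1 ∧ ‖f q‖ < c := fun n =>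
    hcon _ (by have : (0:ℝ) < 1 / ((n : ℝ) + 1) := by positivity
               linarith)
  choose s hs1 hs2 hs3 using hex
  obtain ⟨p, hp, φ, hφ, hlim⟩ := (isCompact_closedBall (0 : ℍ[ℝ]) c).tendsto_subseq
    (x := fun n => f (s n)) (fun n => by simpa using (hs3 n).le)
  have hp' : ‖p‖ ≤ c := by simpa using hp
  obtain ⟨q0, hq0, rfl⟩ := hbij.surjOn (show p ∈ Metric.ball 0 1 by simp; linarith)
  have hq0' : ‖q0‖ < 1 := by simpa using hq0
  obtain ⟨ρ, hρ1, hρ⟩ := exists_between hq0'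
  have hρ0 : 0 < ρ := (norm_nonneg _).trans_lt hρ1
  have hsub : Metric.sphere (0 : ℍ[ℝ]) ρ ⊆ Metric.ball 0 1 := fun q hq => by
    have : ‖q‖ = ρ := by simpa using hq
    simp; linarith
  have hne : (Metric.sphere (0 : ℍ[ℝ]) ρ).Nonempty := NormedSpace.sphere_nonempty.2 hρ0.le
  obtain ⟨q1, hq1, hmin⟩ := (isCompact_sphere (0 : ℍ[ℝ]) ρ).exists_isMinOn hne
    (f := fun q => ‖f q - f q0‖) (((q_cont hf).mono hsub).sub continuousOn_const).norm
  have hpos : 0 < ‖f q1 - f q0‖ := by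
    rw [norm_pos_iff, sub_ne_zero]
    intro he
    have := hbij.injOn (hsub hq1) hq0 he
    have h2 : ‖q1‖ = ρ := by simpa using hq1
    rw [this] at h2
    linarith
  set ε := ‖f q1 - f q0‖ / 2 with hε
  have hε0 : 0 < ε := by positivity
  have e1 : ∀ᶠ n in Filter.atTop, ‖f (s (φ n)) - f q0‖ < ε := by
    have := (tendsto_iff_norm_sub_tendsto_zero.1 hlim).eventually_lt_const hε0
    simpa using this
  have e2 : ∀ᶠ n in Filter.atTop, ρ < ‖s (φ n)‖ := by
    have h1 := (tendsto_one_div_add_atTop_nhds_zero_nat (𝕜 := ℝ)).comp hφ.tendsto_atTop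
    have h2 := h1.eventually_lt_const (show 0 < 1 - ρ by linarith)
    filter_upwards [h2] with n hn
    have := hs1 (φ n)
    simp only [Function.comp] at hn
    linarith
  obtain ⟨n, hn1, hn2⟩ := (e1.and e2).exists
  set w := f (s (φ n)) with hw
  have hb : ∀ q ∈ Metric.ball (0 : ℍ[ℝ]) 1,
      HasSum (fun k : ℕ => q ^ k * (a k - if k = 0 then w else 0)) (f q - w) := by
    intro q hq
    have h1 : HasSum (fun k : ℕ => q ^ k * (if k = 0 then w else 0)) w := by
      have := hasSum_single (f := fun k : ℕ => q ^ k * (if k = 0 then w else 0)) 0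
        (fun k hk => by simp [hk])
      simpa using this
    simpa only [mul_sub] using (hf q hq).sub h1
  have key := q_min hb hρ0 hρ hε0 (fun q hq he => by
      have h1 : f q = f (s (φ n)) := sub_eq_zero.1 he
      have := hbij.injOn (show q ∈ _ by simp; linarith)
        (show s (φ n) ∈ _ by simpa using hs2 (φ n)) h1
      rw [this] at hq
      linarith) (fun q hq => by
      have h1 : ‖f q1 - f q0‖ ≤ ‖f q - f q0‖ := hmin (show q ∈ _ by simpa using hq)
      have h2 := norm_sub_le_norm_sub_add_norm_sub (f q) w (f q0)
      linarith) q0 hρ1.le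
  rw [norm_sub_rev] at key
  linarith

theorem q_ge {x : ℝ} (h : ∀ c, 0 < c → c < 1 → c ≤ x) : 1 ≤ x := by
  by_contra! hx
  obtain ⟨c, h1, h2⟩ := exists_between (max_lt hx zero_lt_one)
  have := h c ((le_max_right _ _).trans_lt h1) h2
  linarith [le_max_left x 0]

theorem q_const (g : ℍ[ℝ] → ℍ[ℝ]) (b : ℕ → ℍ[ℝ])
    (hb : ∀ q ∈ Metric.ball (0 : ℍ[ℝ]) 1, HasSum (fun n : ℕ => q ^ n * b n) (g q))
    (hle : ∀ q, ‖q‖ < 1 → ‖g q‖ ≤ 1) (h0 : ‖g 0‖ = 1) (q : ℍ[ℝ]) (hq : ‖q‖ < 1) : g q = g 0 := by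
  obtain ⟨z, v, hv0, hc⟩ := q_conj q
  have hn := q_norm_eq hv0 hc
  have := q_strict
  have h00 : qH b 0 v = v * g 0 := q_apply hb (by simp) v 0 (by simp) (by simp)
  have hmax : IsMaxOn (norm ∘ fun z => qH b z v) (Metric.ball (0 : ℂ) 1) 0 := by
    intro y hy
    have hy' : ‖y‖ < 1 := by simpa using hy
    have hc := q_conj' y hv0
    have hn := q_norm_eq hv0 hc
    show ‖qH b y v‖ ≤ ‖qH b 0 v‖
    rw [h00, q_apply hb hy' v _ (by linarith) hc, norm_mul, norm_mul, h0]
    exact mul_le_mul_of_nonneg_left (hle _ (by linarith)) (norm_nonneg _)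
  have := Complex.eqOn_of_isPreconnected_of_isMaxOn_norm
    (convex_ball (0 : ℂ) 1).isPreconnected Metric.isOpen_ball
    (f := fun z => qH b z v) (fun y hy => ((q_diff hb (by simpa using hy)).clm_apply
      (differentiableAt_const v)).differentiableWithinAt) (c := 0) (by simp) hmax
    (show z ∈ _ by simp; linarith)
  simp only [Function.const_apply] at this
  rw [h00, q_apply hb (by linarith) v q hq hc] at this
  exact mul_left_cancel₀ hv0 this

theorem q_main (f : ℍ[ℝ] → ℍ[ℝ]) (a : ℕ → ℍ[ℝ])
    (hf : ∀ q ∈ Metric.ball (0 : ℍ[ℝ]) 1, HasSum (fun n : ℕ => q ^ n * a n) (f q))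
    (hbij : Set.BijOn f (Metric.ball 0 1) (Metric.ball 0 1))
    (h0 : f 0 = 0) :
    ∃ u : ℍ[ℝ], ‖u‖ = 1 ∧ ∀ q ∈ Metric.ball (0 : ℍ[ℝ]) 1, f q = q * u := by
  classical
  have hz0 : ∀ q, ‖q‖ < 1 → f q = 0 → q = 0 := fun q hq he =>
    hbij.injOn (show q ∈ _ by simpa using hq) (show (0 : ℍ[ℝ]) ∈ _ by simp) (by rw [he, h0])
  have hex : ∃ n, a n ≠ 0 := by
    by_contra! hcon
    have h2 : ‖((1 / 2 : ℝ) : ℍ[ℝ])‖ < 1 := by rw [Quaternion.norm_coe]; norm_num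
    have h1 := hf _ (show ((1 / 2 : ℝ) : ℍ[ℝ]) ∈ _ by simpa using h2)
    simp only [hcon, mul_zero] at h1
    have := hz0 _ h2 (h1.unique hasSum_zero)
    have := congrArg norm this
    rw [Quaternion.norm_coe] at this
    norm_num at this
  set m := Nat.find hex with hm
  have ham : a m ≠ 0 := Nat.find_spec hex
  have hlt : ∀ k < m, a k = 0 := fun k hk => by simpa using Nat.find_min hex hk
  have ha0 : a 0 = 0 := by
    have h1 := hf 0 (by simp)
    have h2 := hasSum_single (f := fun k : ℕ => (0 : ℍ[ℝ]) ^ k * a k) 0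
        (fun k hk => by simp [hk])
    have := h1.unique h2
    simpa [h0] using this.symm
  have hm0 : m ≠ 0 := fun h => ham (h ▸ ha0)
  -- the quotient
  have hsum : ∀ q ∈ Metric.ball (0 : ℍ[ℝ]) 1,
      HasSum (fun n : ℕ => q ^ n * a (n + m)) (∑' n : ℕ, q ^ n * a (n + m)) := by
    intro q hq
    apply Summable.hasSum
    by_cases hq0 : q = 0
    · exact (hasSum_single (f := fun k : ℕ => q ^ k * a (k + m)) 0
        (fun k hk => by simp [hk, hq0])).summable
    · have h1 := ((summable_nat_add_iff m).2 (hf q hq).summable).mul_left (q ^ m)⁻¹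
      refine h1.congr fun n => ?_
      rw [add_comm n m, pow_add, mul_assoc, inv_mul_cancel_left₀ (pow_ne_zero _ hq0)]
  set g : ℍ[ℝ] → ℍ[ℝ] := fun q => ∑' n : ℕ, q ^ n * a (n + m) with hg
  have hg0 : g 0 = a m := by
    have h2 := hasSum_single (f := fun k : ℕ => (0 : ℍ[ℝ]) ^ k * a (k + m)) 0
        (fun k hk => by simp [hk])
    simpa using h2.tsum_eq
  have hfg : ∀ q, ‖q‖ < 1 → f q = q ^ m * g q := by
    intro q hq
    have hq' : q ∈ Metric.ball (0 : ℍ[ℝ]) 1 := by simpa using hq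
    have h1 := (hasSum_nat_add_iff' m).2 (hf q hq')
    rw [Finset.sum_eq_zero (fun k hk => by rw [hlt k (Finset.mem_range.1 hk), mul_zero]),
      sub_zero] at h1
    have e : (fun n => q ^ (n + m) * a (n + m)) = fun n => q ^ m * (q ^ n * a (n + m)) := by
      funext n
      rw [add_comm n m, pow_add, mul_assoc]
    rw [e] at h1
    exact h1.unique ((hsum q hq').mul_left (q ^ m))
  have hgne : ∀ q, ‖q‖ < 1 → g q ≠ 0 := by
    intro q hq he
    have := hz0 q hq (by rw [hfg q hq, he, mul_zero])
    rw [this, hg0] at he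
    exact ham he
  have hlow : ∀ q, ‖q‖ < 1 → 1 ≤ ‖g q‖ := by
    intro q hq
    refine q_ge fun c hc0 hc1 => ?_
    obtain ⟨ρ, hρ, hρ'⟩ := q_proper f a hf hbij hc1
    obtain ⟨r, hr1, hr2⟩ := exists_between (max_lt hρ hq)
    have hr3 : ‖q‖ < r := (le_max_right _ _).trans_lt hr1
    have hr0 : 0 < r := (norm_nonneg _).trans_lt hr3
    refine q_min hsum hr0 hr2 hc0 (fun p hp => hgne p (by linarith)) (fun p hp => ?_) q hr3.le
    have h1 := hρ' p (by rw [hp]; exact (le_max_left _ _).trans hr1.le) (by linarith)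
    rw [hfg p (by linarith), norm_mul, norm_pow] at h1
    have h2 : ‖p‖ ^ m ≤ 1 := pow_le_one₀ (norm_nonneg _) (by linarith)
    exact h1.trans (mul_le_of_le_one_left (norm_nonneg _) h2)
  have hup : ∀ q, ‖q‖ < 1 → ‖g q‖ ≤ 1 := by
    intro q hq
    have hgpos := norm_pos_iff.2 (hgne q hq)
    have hgoal : ∀ r, ‖q‖ < r → r < 1 → ‖g q‖ * r ^ m ≤ 1 := by
      intro r hr hr1
      have hr0 : 0 < r := (norm_nonneg _).trans_lt hr
      obtain ⟨z, v, hv0, hc⟩ := q_conj q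
      have hn := q_norm_eq hv0 hc
      have hcl : closure (Metric.ball (0 : ℂ) r) = Metric.closedBall 0 r := closure_ball _ hr0.ne'
      have hd : DiffContOnCl ℂ (fun z => qH (fun n => a (n + m)) z v) (Metric.ball 0 r) := by
        apply DifferentiableOn.diffContOnCl
        rw [hcl]
        intro y hy
        have hy' : ‖y‖ ≤ r := by simpa using hy
        exact ((q_diff hsum (hy'.trans_lt hr1)).clm_apply
          (differentiableAt_const v)).differentiableWithinAt
      have h2 := Complex.norm_le_of_forall_mem_frontier_norm_le Metric.isBounded_ball hd
        (C := ‖v‖ * (r ^ m)⁻¹) (fun y hy => by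
          rw [frontier_ball _ hr0.ne'] at hy
          have hy' : ‖y‖ = r := by simpa using hy
          have hc := q_conj' y hv0
          have hn := q_norm_eq hv0 hc
          rw [q_apply hsum (by linarith) v _ (by linarith) hc, norm_mul]
          set p := v⁻¹ * (y : ℍ[ℝ]) * v
          refine mul_le_mul_of_nonneg_left ?_ (norm_nonneg _)
          have hp1 : ‖p‖ < 1 := by linarith
          have h3 : ‖f p‖ < 1 := by
            simpa using hbij.mapsTo (show p ∈ _ by simpa using hp1)
          rw [hfg p hp1, norm_mul, norm_pow, ← hn, hy', mul_comm] at h3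
          rw [← one_div, le_div_iff₀ (by positivity)]
          exact h3.le) (z := z) (by rw [hcl]; simp; linarith)
      rw [q_apply hsum (by linarith) v q hq hc, norm_mul] at h2
      have h3 := le_of_mul_le_mul_left h2 (norm_pos_iff.2 hv0)
      rwa [← one_div, le_div_iff₀ (by positivity)] at h3
    have hcont : Filter.Tendsto (fun r : ℝ => ‖g q‖ * r ^ m) (nhdsWithin 1 (Set.Iio 1))
        (nhds (‖g q‖ * 1 ^ m)) :=
      ((continuous_const.mul (continuous_id.pow m)).tendsto 1).mono_left nhdsWithin_le_nhds
    rw [one_pow, mul_one] at hcont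
    refine le_of_tendsto hcont ?_
    filter_upwards [Ioo_mem_nhdsLT hq] with r hr
    exact hgoal r hr.1 hr.2
  have hu : ‖g 0‖ = 1 := le_antisymm (hup 0 (by simp)) (hlow 0 (by simp))
  have hfm : ∀ q, ‖q‖ < 1 → f q = q ^ m * g 0 := fun q hq => by
    rw [hfg q hq, q_const g _ hsum hup hu q hq]
  have hm1 : m = 1 := by
    have hζ := Complex.isPrimitiveRoot_exp m hm0
    set ζ := Complex.exp (2 * Real.pi * Complex.I / m)
    have hζn : ‖ζ‖ = 1 := hζ.norm'_eq_one hm0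
    have hcn : ∀ z : ℂ, ‖(z : ℍ[ℝ])‖ = ‖z‖ := q_cnorm
    have hpow : ∀ z : ℂ, ((z ^ m : ℂ) : ℍ[ℝ]) = (z : ℍ[ℝ]) ^ m :=
      fun z => map_pow (Quaternion.ofComplex) z m
    have n1 : ‖((1 / 2 : ℂ) : ℍ[ℝ])‖ < 1 := by rw [hcn]; norm_num
    have n2 : ‖((ζ * (1 / 2) : ℂ) : ℍ[ℝ])‖ < 1 := by rw [hcn, norm_mul, hζn]; norm_num
    have he : f ((1 / 2 : ℂ) : ℍ[ℝ]) = f ((ζ * (1 / 2) : ℂ) : ℍ[ℝ]) := by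
      rw [hfm _ n1, hfm _ n2, ← hpow, ← hpow, mul_pow, hζ.pow_eq_one, one_mul]
    have h3 := hbij.injOn (show ((1 / 2 : ℂ) : ℍ[ℝ]) ∈ _ from mem_ball_zero_iff.2 n1)
      (show ((ζ * (1 / 2) : ℂ) : ℍ[ℝ]) ∈ _ from mem_ball_zero_iff.2 n2) he
    have h4 : (1 / 2 : ℂ) = ζ * (1 / 2) := q_cinj h3
    have h5 : ζ = 1 := by
      have : (1 / 2 : ℂ) ≠ 0 := by norm_num
      exact mul_right_cancel₀ this (by rw [one_mul]; exact h4.symm)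
    rw [h5] at hζ
    exact hζ.eq_orderOf.trans orderOf_one
  refine ⟨g 0, hu, fun q hq => ?_⟩
  rw [hfm q (by simpa using hq), hm1, pow_one]
end

/-- A regular bijection of the unit ball `𝔹` onto itself fixing `0` is a rotation:
`f(q) = qu` for some `u` with `|u| = 1`. -/
theorem regular_bijection_fixing_zero (f : ℍ[ℝ] → ℍ[ℝ]) (a : ℕ → ℍ[ℝ])
    (hf : ∀ q ∈ Metric.ball (0 : ℍ[ℝ]) 1, HasSum (fun n : ℕ => q ^ n * a n) (f q))
    (hbij : Set.BijOn f (Metric.ball 0 1) (Metric.ball 0 1))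
    (h0 : f 0 = 0) :
    ∃ u : ℍ[ℝ], ‖u‖ = 1 ∧ ∀ q ∈ Metric.ball (0 : ℍ[ℝ]) 1, f q = q * u := by
  exact q_main f a hf hbij h0
end

section
/- For all a, b ∈ ℍ with |a| < 1 and |b| < 1 there exist c ∈ ℍ with |c| < 1 and u ∈ ℍ with |u| = 1 such that the regular Moebius transformation M(q) = (1 − q·conj(c))^{-*} * (q − c)·u, given explicitly by M(q) = (|c|²q² − 2Re(c)q + 1)⁻¹ · (−q²c + q(1 + c²) − c) · u, satisfies M(a) = b. (The regular Moebius transformations act transitively on the open unit ball.) -/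
open Quaternion

/-- The regular Moebius transformations act transitively on the open unit ball: for all
`a, b ∈ 𝔹` there is a regular Moebius transformation
`M(q) = (|c|²q² − 2Re(c)q + 1)⁻¹ · (−q²c + q(1 + c²) − c) · u` with `M(a) = b`. -/
theorem regular_moebius_transitive (a b : ℍ[ℝ]) (ha : ‖a‖ < 1) (hb : ‖b‖ < 1) :
    ∃ c u : ℍ[ℝ], ‖c‖ < 1 ∧ ‖u‖ = 1 ∧
      (((‖c‖ ^ 2 : ℝ) : ℍ[ℝ]) * a ^ 2 - ((2 * c.re : ℝ) : ℍ[ℝ]) * a + 1)⁻¹ *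
        (-(a ^ 2) * c + a * (1 + c ^ 2) - c) * u = b := by
  obtain ⟨u, hu, hbu⟩ : ∃ u : ℍ[ℝ], ‖u‖ = 1 ∧ ((‖b‖ : ℝ) : ℍ[ℝ]) * u = b := by
    by_cases h : b = 0
    · exact ⟨1, by simp, by simp [h]⟩
    · have h' : ‖b‖ ≠ 0 := norm_ne_zero_iff.mpr h
      refine ⟨((‖b‖⁻¹ : ℝ) : ℍ[ℝ]) * b, ?_, ?_⟩
      · rw [norm_mul, Quaternion.norm_coe, norm_inv, norm_norm, inv_mul_cancel₀ h']
      · rw [← mul_assoc, ← Quaternion.coe_mul, mul_inv_cancel₀ h', Quaternion.coe_one, one_mul]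
  have hr0 : 0 ≤ ‖b‖ := norm_nonneg b
  have hp0 : 0 ≤ ‖a‖ := norm_nonneg a
  generalize ‖b‖ = r at *
  have hrp : r * ‖a‖ < 1 := by nlinarith
  have hd : 0 < 1 - r ^ 2 * ‖a‖ ^ 2 := by nlinarith [mul_nonneg hr0 hp0]
  obtain ⟨x, hx⟩ : ∃ x, x = (1 - r ^ 2) / (1 - r ^ 2 * ‖a‖ ^ 2) := ⟨_, rfl⟩
  obtain ⟨y, hy⟩ : ∃ y, y = r * (1 - ‖a‖ ^ 2) / (1 - r ^ 2 * ‖a‖ ^ 2) := ⟨_, rfl⟩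
  have hx0 : 0 ≤ x := by
    rw [hx]; exact div_nonneg (by nlinarith) hd.le
  have hy0 : 0 ≤ y := by
    rw [hy]; exact div_nonneg (mul_nonneg hr0 (by nlinarith)) hd.le
  have e1 : 1 - x = r * y := by rw [hx, hy]; field_simp; ring
  have e2 : y = r * (1 - x * ‖a‖ ^ 2) := by rw [hx, hy]; field_simp; ring
  have hlt : x * ‖a‖ + y < 1 := by
    rw [hx, hy, div_mul_eq_mul_div, ← add_div, div_lt_one hd]
    nlinarith [mul_pos (sub_pos.2 hrp) (mul_pos (sub_pos.2 ha) (sub_pos.2 hb))]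
  clear hx hy
  obtain ⟨c, hc⟩ : ∃ c : ℍ[ℝ], c = (x : ℍ[ℝ]) * a - (y : ℍ[ℝ]) := ⟨_, rfl⟩
  have hcn : ‖c‖ < 1 := by
    refine lt_of_le_of_lt ?_ hlt
    rw [hc]
    refine (norm_sub_le _ _).trans ?_
    rw [norm_mul, Quaternion.norm_coe, Quaternion.norm_coe, Real.norm_of_nonneg hx0,
      Real.norm_of_nonneg hy0]
  have hna : a * star a = ((‖a‖ ^ 2 : ℝ) : ℍ[ℝ]) := by
    rw [Quaternion.self_mul_star, Quaternion.normSq_eq_norm_mul_self, sq]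
  have hnc : c * star c = ((‖c‖ ^ 2 : ℝ) : ℍ[ℝ]) := by
    rw [Quaternion.self_mul_star, Quaternion.normSq_eq_norm_mul_self, sq]
  have hsum : c + star c = ((2 * c.re : ℝ) : ℍ[ℝ]) := by
    exact Quaternion.self_add_star' c
  have hac : a * c = c * a := by
    rw [hc, mul_sub, sub_mul, ← mul_assoc, ← Quaternion.coe_commutes x a,
      ← Quaternion.coe_commutes y a]
  have hsc : star c = ((2 * c.re : ℝ) : ℍ[ℝ]) - c := by rw [← hsum]; abel
  have hacs : a * star c = star c * a := by
    rw [hsc, mul_sub, sub_mul, hac, Quaternion.coe_commutes]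
  have hcc : c * star c = star c * c := by
    rw [Quaternion.self_mul_star, Quaternion.star_mul_self]
  have hD : (((‖c‖ ^ 2 : ℝ) : ℍ[ℝ]) * a ^ 2 - ((2 * c.re : ℝ) : ℍ[ℝ]) * a + 1)
      = (1 - a * star c) * (1 - a * c) := by
    rw [← hnc, ← hsum]
    have h1 : a * star c * (a * c) = c * star c * a ^ 2 := by
      rw [hacs, hac, hcc, sq]
      calc star c * a * (c * a) = star c * (a * c) * a := by noncomm_ring
        _ = _ := by rw [hac]; noncomm_ring
    rw [sub_mul, mul_sub, mul_sub, h1, hac, mul_one (a * star c), hacs]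
    noncomm_ring
  have hN : -(a ^ 2) * c + a * (1 + c ^ 2) - c = (a - c) * (1 - a * c) := by
    have h1 : c * (a * c) = a * c ^ 2 := by rw [← mul_assoc, ← hac, sq, mul_assoc]
    rw [sub_mul, mul_sub, mul_sub, h1]
    noncomm_ring
  have hk : a - c = (r : ℍ[ℝ]) * (1 - a * star c) := by
    have h1 : a * star c = ((x * ‖a‖ ^ 2 : ℝ) : ℍ[ℝ]) - (y : ℍ[ℝ]) * a := by
      rw [hc, star_sub, star_mul, Quaternion.star_coe, Quaternion.star_coe, mul_sub, ← mul_assoc,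
        hna, ← Quaternion.coe_mul, Quaternion.coe_commutes y a, mul_comm x]
    have h2 : (r : ℍ[ℝ]) * (1 - a * star c)
        = ((r * (1 - x * ‖a‖ ^ 2) : ℝ) : ℍ[ℝ]) + ((r * y : ℝ) : ℍ[ℝ]) * a := by
      rw [h1]; push_cast; noncomm_ring
    rw [h2, ← e2, ← e1, hc]; push_cast; noncomm_ring
  have hne : ∀ z : ℍ[ℝ], ‖z‖ < 1 → 1 - a * z ≠ 0 := by
    intro z hz h
    have h1 : ‖a * z‖ = 1 := by rw [← sub_eq_zero.1 h, norm_one]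
    rw [norm_mul] at h1
    nlinarith [norm_nonneg z]
  refine ⟨c, u, hcn, hu, ?_⟩
  have hDne := mul_ne_zero (hne (star c) (by rwa [Quaternion.norm_star])) (hne c hcn)
  rw [hD, hN, hk, mul_assoc (r : ℍ[ℝ]), Quaternion.coe_commutes, ← mul_assoc,
    inv_mul_cancel₀ hDne, one_mul, hbu]
end
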